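/- (Moser's lemma, symmetric version) Let D ⊆ ℂ be the closed disk centered at 0 of area 2 (radius √(2/π)) and let A = {z ∈ ℂ : Re z ∈ [0,1], Im z ∈ [−1,1]}. Suppose θ₀ : ℂ → ℂ is continuous on D, maps D bijectively onto A, is complex-analytic on the interior of D, and satisfies θ₀(conj z) = conj(θ₀(z)) for all z ∈ D. Then there exists u : ℂ → ℂ such that: (1) u maps A bijectively onto A; (2) u is C^∞ (as a map of ℝ²) on the interior of A; (3) u maps the topological boundary of A into the topological boundary of A; (4) u maps {z ∈ A : Im z ≥ 0} onto itself; and (5) the composition θ = u ∘ θ₀ is measure preserving from D to A, i.e. the pushforward under θ of Lebesgue measure restricted to D equals Lebesgue measure restricted to A. -/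

import Mathlib

/-!
The conditions on `u` depend on `θ = u ∘ θ₀` alone once the inverse `g` of `θ₀` is understood, so
it suffices to exhibit one good `θ` and put `u = θ ∘ g`.

On the open disk of radius `R` take the shear `flatten`, `x + iy ↦ (F x, y / √(R² - x²))` with
`F' x = √(R² - x²)`. It is smooth with Jacobian determinant `1`, maps the open disk bijectively onto
the open rectangle and preserves the sign of the imaginary part. Nothing beyond bijectivity is asked
of `u` on the boundary, which is a null set, so `flatten` is completed by any bijection between the
two boundary curves respecting the closed upper half-plane (`exists_model`). If `θ₀` exchanges the
upper and lower halves, which by symmetry is the only alternative to preserving them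
(`im_sign_dichotomy`), the model is precomposed with conjugation.

For `u = θ ∘ g` to be smooth inside and to preserve the boundary, `g` must map interior to interior
and boundary to boundary, and be smooth inside. The boundary statement is the open mapping theorem.
The interior one is a planar invariance-of-domain argument based on lifting through the covering
`exp` (`mem_ball_of_mem_interior`), and holomorphy of `g` follows from the removable singularity
theorem (`differentiableAt_of_injOn_rightInverse`).
-/

open MeasureTheory

/-- The closed disk in `ℂ` centered at `0` of area `2` (radius `√(2/π)`). -/
noncomputable def diskD : Set ℂ := Metric.closedBall 0 (Real.sqrt (2 / Real.pi))

/-- The rectangle `A = [0,1] × [−1,1]` viewed as a subset of `ℂ`. -/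
def rectAc : Set ℂ := {z : ℂ | z.re ∈ Set.Icc (0 : ℝ) 1 ∧ z.im ∈ Set.Icc (-1 : ℝ) 1}

/-! ### Boundary behaviour of the inverse map -/

/-- `w - q` has no continuous logarithm on a circle around `q`. -/
lemma not_exists_log_sphere {q : ℂ} {r : ℝ} (hr : 0 < r) (L : Metric.sphere q r → ℂ)
    (hL : Continuous L) (hexp : ∀ w, Complex.exp (L w) = w - q) : False := by
  have hmem : ∀ t : ℝ, q + r * Complex.exp (t * Complex.I) ∈ Metric.sphere q r := by
    intro t
    simp [Complex.norm_exp_ofReal_mul_I, abs_of_pos hr]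
  let γ : ℝ → Metric.sphere q r := fun t => ⟨_, hmem t⟩
  have hγ : Continuous γ := by
    apply Continuous.subtype_mk
    fun_prop
  -- Along the circle `L - it` is a continuous lift of a constant, hence constant.
  let h : ℝ → ℂ := fun t => L (γ t) - t * Complex.I
  have hh : Continuous h := by
    have := hL.comp hγ
    simp only [h]
    fun_prop
  have hexp' : ∀ t, Complex.exp (h t) = r := by
    intro t
    simp only [h, Complex.exp_sub, hexp, γ, add_sub_cancel_left]
    field_simp [Complex.exp_ne_zero]
  have hconst : h = fun _ => h 0 :=
    Complex.isCoveringMap_exp.eq_of_comp_eq hh continuous_const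
      (by funext t; apply Subtype.ext; simp [hexp']) 0 rfl
  have h1 := congrFun hconst (2 * Real.pi)
  have h2 : γ (2 * Real.pi) = γ 0 := by
    apply Subtype.ext
    simp [γ, Complex.exp_two_pi_mul_I]
  simp only [h, h2] at h1
  have : (2 * Real.pi : ℂ) * Complex.I = 0 := by
    push_cast at h1
    linear_combination -h1
  simp [Real.pi_ne_zero] at this

/-- A homeomorphism of a closed disk onto a planar set `A` maps the boundary circle outside the
interior of `A`. If `q = f p` were interior with `‖p‖ = R`, the homotopy
`(s, w) ↦ f (s * g w) - q` on a small circle around `q` would avoid `0`, because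
`s * g w = p` forces `g w = p`; lifting it through `exp` gives a logarithm of `w - q`. -/
lemma mem_ball_of_mem_interior {R : ℝ} {A : Set ℂ} {f g : ℂ → ℂ}
    (hf : ContinuousOn f (Metric.closedBall 0 R)) (hg : ContinuousOn g A)
    (hbij : Set.BijOn f (Metric.closedBall 0 R) A)
    (hgm : Set.MapsTo g A (Metric.closedBall 0 R)) (hfg : ∀ w ∈ A, f (g w) = w)
    {p : ℂ} (hp : p ∈ Metric.closedBall 0 R) (hq : f p ∈ interior A) :
    p ∈ Metric.ball 0 R := by
  by_contra hpb
  have hpR : ‖p‖ = R := by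
    simp only [mem_closedBall_zero_iff, mem_ball_zero_iff] at hp hpb
    linarith
  have hR0 : 0 ≤ R := hpR ▸ norm_nonneg p
  set q := f p with hqdef
  obtain ⟨r, hr, hrA⟩ := Metric.nhds_basis_closedBall.mem_iff.1 (mem_interior_iff_mem_nhds.1 hq)
  have hsA : Metric.sphere q r ⊆ A := Metric.sphere_subset_closedBall.trans hrA
  have hsm : ∀ x : unitInterval × Metric.sphere q r,
      ((x.1 : ℝ) : ℂ) * g x.2 ∈ Metric.closedBall (0 : ℂ) R := by
    rintro ⟨s, w⟩
    have h1 := hgm (hsA w.2)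
    simp only [mem_closedBall_zero_iff, norm_mul, Complex.norm_real, Real.norm_eq_abs,
      abs_of_nonneg s.2.1] at h1 ⊢
    nlinarith [s.2.1, s.2.2, norm_nonneg (g w)]
  have hne : ∀ x : unitInterval × Metric.sphere q r,
      f (((x.1 : ℝ) : ℂ) * g x.2) - q ≠ 0 := by
    rintro ⟨s, w⟩ h0
    have h1 : ((s : ℝ) : ℂ) * g w = p := hbij.injOn (hsm (s, w)) hp (sub_eq_zero.1 h0)
    have h2 := hgm (hsA w.2)
    have h3 : (s : ℝ) * ‖g w‖ = R := by
      rw [← hpR, ← h1]; simp [abs_of_nonneg s.2.1]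
    simp only [mem_closedBall_zero_iff] at h2
    have h4 : g w = p := by
      rcases eq_or_lt_of_le s.2.2 with h | h
      · rw [← h1, h]; simp
      · have : ‖g w‖ = 0 := by nlinarith [norm_nonneg (g w), s.2.1]
        have hR : R = 0 := by rw [← h3, this, mul_zero]
        rw [norm_eq_zero.1 this, eq_comm, ← norm_eq_zero, hpR, hR]
    have h5 : (w : ℂ) = q := by rw [← hfg w (hsA w.2), h4]
    have h6 := w.2
    rw [h5] at h6
    simp [hr.ne] at h6
  have hgc : Continuous fun x : unitInterval × Metric.sphere q r => g x.2 :=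
    hg.comp_continuous (by fun_prop) fun x => hsA x.2.2
  have hc : Continuous fun x : unitInterval × Metric.sphere q r =>
      f (((x.1 : ℝ) : ℂ) * g x.2) - q := by
    refine Continuous.sub ?_ continuous_const
    refine hf.comp_continuous ?_ hsm
    exact (Complex.continuous_ofReal.comp (by fun_prop)).mul hgc
  let H : C(unitInterval × Metric.sphere q r, {z : ℂ // z ≠ 0}) :=
    ⟨fun x => ⟨_, hne x⟩, hc.subtype_mk _⟩
  have h00 : f 0 - q ≠ 0 := by
    have := hne (0, ⟨q + r, by simp [abs_of_pos hr]⟩)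
    simpa using this
  have H0 : ∀ w, H (0, w) = ⟨_, Complex.exp_ne_zero
      ((ContinuousMap.const (Metric.sphere q r) (Complex.log (f 0 - q))) w)⟩ := by
    intro w
    apply Subtype.ext
    simp [H, Complex.exp_log h00]
  refine not_exists_log_sphere hr
    (fun w => Complex.isCoveringMap_exp.liftHomotopy H _ H0 (1, w)) (by fun_prop) fun w => ?_
  have := congrArg Subtype.val
    (congrFun (Complex.isCoveringMap_exp.liftHomotopy_lifts H _ H0) (1, w))
  simp only [Function.comp_apply] at this
  rw [this]
  simp [H, hfg w (hsA w.2)]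

/-- The inverse of an injective holomorphic function is holomorphic. At a possible critical value
the inverse is continuous, and nearby values are not critical, so the singularity is removable. -/
lemma differentiableAt_of_injOn_rightInverse {f g : ℂ → ℂ} {z w : ℂ} {U V : Set ℂ}
    (hU : IsOpen U) (hV : IsOpen V)
    (hf : DifferentiableOn ℂ f U) (hinj : Set.InjOn f U) (hg : ContinuousOn g V)
    (hgm : Set.MapsTo g V U) (hfg : ∀ w ∈ V, f (g w) = w) (hw : w ∈ V) (hz : g w = z) :
    DifferentiableAt ℂ g w := by
  have hzU : z ∈ U := hz ▸ hgm hw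
  have hd : AnalyticAt ℂ (deriv f) z := (hf.analyticAt (hU.mem_nhds hzU)).deriv
  have hne : ∀ᶠ y in nhdsWithin z {z}ᶜ, deriv f y ≠ 0 := by
    refine hd.eventually_eq_zero_or_eventually_ne_zero.resolve_left fun h => ?_
    -- A vanishing derivative near `z` makes `f` constant on a ball, against injectivity.
    obtain ⟨ε, hε, hball⟩ := Metric.eventually_nhds_iff_ball.1 (h.and (hU.mem_nhds hzU))
    have hmem : z + (ε / 2 : ℝ) ∈ Metric.ball z ε := by
      simpa [abs_of_pos hε] using hε
    have heq := (convex_ball z ε).is_const_of_fderivWithin_eq_zero (𝕜 := ℂ) (f := f)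
      (fun y hy => ((hf y (hball y hy).2).mono fun x hx => (hball x hx).2))
      (fun y hy => by
        rw [fderivWithin_of_isOpen Metric.isOpen_ball hy]
        ext
        simp [(hball y hy).1]) (Metric.mem_ball_self hε) hmem
    have := hinj hzU (hball _ hmem).2 heq
    simp [hε.ne'] at this
  have hga : ∀ v ∈ V, ContinuousAt g v := fun v hv => hg.continuousAt (hV.mem_nhds hv)
  have hev : ∀ᶠ v in nhds w, v ∈ V ∧ (v ≠ w → deriv f (g v) ≠ 0) := by
    have h1 : ∀ᶠ v in nhds w, g v ≠ z → deriv f (g v) ≠ 0 :=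
      (hz ▸ (hga w hw) : Filter.Tendsto g (nhds w) (nhds z)).eventually
        (eventually_nhdsWithin_iff.1 hne)
    filter_upwards [h1, hV.mem_nhds hw] with v h1 hv
    refine ⟨hv, fun hvw => h1 fun h => hvw ?_⟩
    rw [← hfg v hv, h, ← hz, hfg w hw]
  refine DifferentiableOn.differentiableAt
    ((Complex.differentiableOn_compl_singleton_and_continuousAt_iff hev).1 ⟨?_, hga w hw⟩) hev
  rintro v ⟨⟨hv, hv'⟩, hvw⟩
  have hfd := (hf.differentiableAt (hU.mem_nhds (hgm hv))).hasDerivAt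
  exact (hfd.of_local_left_inverse (hga v hv) (hv' hvw)
    (Filter.eventually_of_mem (hV.mem_nhds hv) hfg)).differentiableAt.differentiableWithinAt

/-! ### An area-preserving map of the open disk onto the open rectangle -/

/-- The radius of `diskD`. -/
noncomputable def diskRadius : ℝ := Real.sqrt (2 / Real.pi)

lemma diskRadius_pos : 0 < diskRadius := Real.sqrt_pos.2 (by positivity)

lemma diskRadius_sq : diskRadius ^ 2 = 2 / Real.pi := Real.sq_sqrt (by positivity)

/-- Half the area of the part of `diskD` to the left of abscissa `x`, in closed form; equivalently
`∫ t in -R..x, √(R² - t²)`. -/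
noncomputable def halfArea (x : ℝ) : ℝ :=
  1 / 2 + x * Real.sqrt (diskRadius ^ 2 - x ^ 2) / 2 + Real.arcsin (x / diskRadius) / Real.pi

/-- The map `x + iy ↦ (halfArea x, y / √(R² - x²))`, which has Jacobian determinant `1`: vertical
chords are rescaled to length `2` and abscissae are spread out accordingly. -/
noncomputable def flatten (z : ℂ) : ℂ :=
  ⟨halfArea z.re, z.im / Real.sqrt (diskRadius ^ 2 - z.re ^ 2)⟩

lemma radicand_pos {x : ℝ} (hx : x ∈ Set.Ioo (-diskRadius) diskRadius) :
    0 < diskRadius ^ 2 - x ^ 2 := by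
  nlinarith [hx.1, hx.2]

lemma div_radius_ne {x : ℝ} (hx : x ∈ Set.Ioo (-diskRadius) diskRadius) :
    x / diskRadius ≠ -1 ∧ x / diskRadius ≠ 1 := by
  have hR := diskRadius_pos
  constructor
  · intro h
    rw [div_eq_iff hR.ne'] at h
    linarith [hx.1]
  · intro h
    rw [div_eq_iff hR.ne'] at h
    linarith [hx.2]

lemma hasDerivAt_halfArea {x : ℝ} (hx : x ∈ Set.Ioo (-diskRadius) diskRadius) :
    HasDerivAt halfArea (Real.sqrt (diskRadius ^ 2 - x ^ 2)) x := by
  have hR := diskRadius_pos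
  have hpos := radicand_pos hx
  have hs : HasDerivAt (fun x : ℝ => Real.sqrt (diskRadius ^ 2 - x ^ 2))
      (-(2 * x) / (2 * Real.sqrt (diskRadius ^ 2 - x ^ 2))) x := by
    have h1 : HasDerivAt (fun x : ℝ => diskRadius ^ 2 - x ^ 2) (-(2 * x)) x := by
      simpa using (hasDerivAt_pow 2 x).const_sub (diskRadius ^ 2)
    exact h1.sqrt hpos.ne'
  have ha : HasDerivAt (fun x : ℝ => Real.arcsin (x / diskRadius))
      (1 / Real.sqrt (1 - (x / diskRadius) ^ 2) * (1 / diskRadius)) x :=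
    HasDerivAt.comp (h₂ := Real.arcsin) (h := fun x : ℝ => x / diskRadius) x
      (Real.hasDerivAt_arcsin (div_radius_ne hx).1 (div_radius_ne hx).2)
      ((hasDerivAt_id x).div_const diskRadius)
  have key := (((hasDerivAt_id x).mul hs).div_const 2).const_add (1 / 2) |>.add
    (ha.div_const Real.pi)
  have hsq : Real.sqrt (1 - (x / diskRadius) ^ 2)
      = Real.sqrt (diskRadius ^ 2 - x ^ 2) / diskRadius := by
    rw [← Real.sqrt_sq hR.le, ← Real.sqrt_div' _ (by positivity), Real.sqrt_sq hR.le]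
    congr 1
    field_simp
  refine (key.congr_deriv ?_).congr_of_eventuallyEq (Filter.Eventually.of_forall fun y => ?_)
  · rw [hsq]
    have hS := Real.sqrt_pos.2 hpos
    have hS2 := Real.sq_sqrt hpos.le
    set S := Real.sqrt (diskRadius ^ 2 - x ^ 2)
    have hpi : Real.pi * diskRadius ^ 2 = 2 := by
      rw [diskRadius_sq]; field_simp
    have hpi0 := Real.pi_pos
    simp only [id]
    field_simp
    nlinarith
  · simp [halfArea]

lemma continuous_halfArea : Continuous halfArea := by
  unfold halfArea
  have := Real.continuous_arcsin
  fun_prop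

lemma halfArea_left : halfArea (-diskRadius) = 0 := by
  have hR := diskRadius_pos
  have : -diskRadius / diskRadius = -1 := by field_simp
  simp only [halfArea, this, Real.arcsin_neg_one]
  have hpi0 := Real.pi_pos
  simp
  field_simp
  norm_num

lemma halfArea_right : halfArea diskRadius = 1 := by
  have hR := diskRadius_pos
  simp only [halfArea, div_self hR.ne', Real.arcsin_one]
  have hpi0 := Real.pi_pos
  simp
  field_simp
  norm_num

lemma strictMonoOn_halfArea :
    StrictMonoOn halfArea (Set.Icc (-diskRadius) diskRadius) := by
  refine strictMonoOn_of_deriv_pos (convex_Icc _ _) continuous_halfArea.continuousOn fun x hx => ?_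
  rw [interior_Icc] at hx
  rw [(hasDerivAt_halfArea hx).deriv]
  exact Real.sqrt_pos.2 (radicand_pos hx)

lemma bijOn_halfArea :
    Set.BijOn halfArea (Set.Ioo (-diskRadius) diskRadius) (Set.Ioo 0 1) := by
  have hR := diskRadius_pos
  refine ⟨fun x hx => ?_, strictMonoOn_halfArea.injOn.mono Set.Ioo_subset_Icc_self, ?_⟩
  · rw [← halfArea_left, ← halfArea_right]
    exact ⟨strictMonoOn_halfArea (Set.left_mem_Icc.2 (by linarith)) (Set.Ioo_subset_Icc_self hx)
      hx.1, strictMonoOn_halfArea (Set.Ioo_subset_Icc_self hx)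
      (Set.right_mem_Icc.2 (by linarith)) hx.2⟩
  · have := intermediate_value_Ioo (show -diskRadius ≤ diskRadius by linarith)
      continuous_halfArea.continuousOn
    rwa [halfArea_left, halfArea_right] at this

/-- Membership in the open disk, as a condition on chords. -/
lemma mem_ball_iff_chord {z : ℂ} : z ∈ Metric.ball (0 : ℂ) diskRadius ↔
    z.re ∈ Set.Ioo (-diskRadius) diskRadius ∧
      |z.im| < Real.sqrt (diskRadius ^ 2 - z.re ^ 2) := by
  have hR := diskRadius_pos
  have h1 : z ∈ Metric.ball (0 : ℂ) diskRadius ↔ z.re ^ 2 + z.im ^ 2 < diskRadius ^ 2 := by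
    rw [mem_ball_zero_iff, ← sq_lt_sq₀ (norm_nonneg z) hR.le, Complex.sq_norm, Complex.normSq_apply]
    ring_nf
  rw [h1, Real.lt_sqrt (abs_nonneg _), sq_abs]
  constructor
  · intro h
    refine ⟨abs_lt.1 (abs_lt_of_sq_lt_sq ?_ hR.le), by linarith⟩
    nlinarith [sq_nonneg z.im]
  · rintro ⟨-, h⟩
    linarith

lemma interior_rectAc :
    interior rectAc = {z : ℂ | z.re ∈ Set.Ioo (0 : ℝ) 1 ∧ z.im ∈ Set.Ioo (-1 : ℝ) 1} := by
  have : rectAc = Set.Icc (0 : ℝ) 1 ×ℂ Set.Icc (-1 : ℝ) 1 := by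
    ext z
    simp only [Complex.mem_reProdIm]
    rfl
  rw [this, Complex.interior_reProdIm, interior_Icc, interior_Icc]
  ext z
  simp only [Complex.mem_reProdIm]
  rfl

lemma bijOn_flatten :
    Set.BijOn flatten (Metric.ball 0 diskRadius) (interior rectAc) := by
  rw [interior_rectAc]
  refine ⟨fun z hz => ?_, fun z hz w hw h => ?_, fun w hw => ?_⟩
  · obtain ⟨h1, h2⟩ := mem_ball_iff_chord.1 hz
    refine ⟨bijOn_halfArea.mapsTo h1, ?_⟩
    have hS := Real.sqrt_pos.2 (radicand_pos h1)
    have : |z.im / Real.sqrt (diskRadius ^ 2 - z.re ^ 2)| < 1 := by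
      rwa [abs_div, abs_of_pos hS, div_lt_one hS]
    exact abs_lt.1 this
  · obtain ⟨h1, h2⟩ := mem_ball_iff_chord.1 hz
    obtain ⟨h3, h4⟩ := mem_ball_iff_chord.1 hw
    have hre : z.re = w.re := bijOn_halfArea.injOn h1 h3 (congrArg Complex.re h)
    have him := congrArg Complex.im h
    simp only [flatten, hre] at him
    have hS := Real.sqrt_pos.2 (radicand_pos h3)
    exact Complex.ext hre ((div_left_inj' hS.ne').1 him)
  · obtain ⟨x, hx, hxw⟩ := bijOn_halfArea.surjOn hw.1
    have hS := Real.sqrt_pos.2 (radicand_pos hx)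
    refine ⟨⟨x, w.im * Real.sqrt (diskRadius ^ 2 - x ^ 2)⟩, mem_ball_iff_chord.2 ⟨hx, ?_⟩, ?_⟩
    · simp only [abs_mul, abs_of_pos hS]
      have := abs_lt.2 hw.2
      nlinarith
    · apply Complex.ext
      · exact hxw
      · simp only [flatten]
        field_simp

lemma contDiffOn_flatten :
    ContDiffOn ℝ (⊤ : ℕ∞) flatten (Metric.ball 0 diskRadius) := by
  intro z hz
  obtain ⟨h1, h2⟩ := mem_ball_iff_chord.1 hz
  have hS := Real.sqrt_pos.2 (radicand_pos h1)
  have hre : ContDiffAt ℝ (⊤ : ℕ∞) (fun z : ℂ => z.re) z := Complex.reCLM.contDiff.contDiffAt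
  have him : ContDiffAt ℝ (⊤ : ℕ∞) (fun z : ℂ => z.im) z := Complex.imCLM.contDiff.contDiffAt
  have hs : ContDiffAt ℝ (⊤ : ℕ∞) (fun z : ℂ => Real.sqrt (diskRadius ^ 2 - z.re ^ 2)) z :=
    (contDiffAt_const.sub (hre.pow 2)).sqrt (radicand_pos h1).ne'
  have ha : ContDiffAt ℝ (⊤ : ℕ∞) (fun z : ℂ => Real.arcsin (z.re / diskRadius)) z :=
    ContDiffAt.comp (g := Real.arcsin) (f := fun z : ℂ => z.re / diskRadius) z
      (Real.contDiffAt_arcsin (div_radius_ne h1).1 (div_radius_ne h1).2)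
      (hre.div_const _)
  have hF : ContDiffAt ℝ (⊤ : ℕ∞) (fun z : ℂ => halfArea z.re) z :=
    (contDiffAt_const.add ((hre.mul hs).div_const 2)).add (ha.div_const _)
  have hG := him.div hs hS.ne'
  have := (Complex.equivRealProdCLM.symm.contDiff.contDiffAt).comp z (hF.prodMk hG)
  exact this.contDiffWithinAt

lemma map_flatten :
    Measure.map flatten (volume.restrict (Metric.ball 0 diskRadius))
      = volume.restrict (interior rectAc) := by
  have hd : ∀ z ∈ Metric.ball (0 : ℂ) diskRadius, ∃ L : ℂ →L[ℝ] ℂ,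
      HasFDerivAt flatten L z ∧ L.det = 1 := by
    intro z hz
    obtain ⟨h1, h2⟩ := mem_ball_iff_chord.1 hz
    have hS := Real.sqrt_pos.2 (radicand_pos h1)
    have hdiff := (contDiffOn_flatten.contDiffAt
      (Metric.isOpen_ball.mem_nhds hz)).differentiableAt (by simp)
    refine ⟨fderiv ℝ flatten z, hdiff.hasFDerivAt, ?_⟩
    have hfd := hdiff.hasFDerivAt
    set L := fderiv ℝ flatten z
    set S := Real.sqrt (diskRadius ^ 2 - z.re ^ 2) with hSdef
    have hre : HasFDerivAt (fun z : ℂ => z.re) Complex.reCLM z := Complex.reCLM.hasFDerivAt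
    -- The first coordinate depends on `re` only.
    have hA : Complex.reCLM.comp L = S • Complex.reCLM := by
      have h3 : HasFDerivAt (fun z : ℂ => (flatten z).re) (Complex.reCLM.comp L) z :=
        (Complex.reCLM.hasFDerivAt).comp z hfd
      exact h3.unique ((hasDerivAt_halfArea h1).comp_hasFDerivAt z hre)
    -- Along a vertical line the second coordinate is division by the constant `S`.
    have hB : (L Complex.I).im = 1 / S := by
      have h3 : HasDerivAt (fun t : ℝ => (flatten (z + t * Complex.I)).im) (L Complex.I).im 0 := by
        have h4 : HasDerivAt (fun t : ℝ => z + t * Complex.I) Complex.I 0 := by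
          simpa using ((Complex.ofRealCLM.hasDerivAt (x := (0 : ℝ))).mul_const
            Complex.I).const_add z
        have h5 : HasFDerivAt flatten L (z + ((0 : ℝ) : ℂ) * Complex.I) := by simpa using hfd
        exact (Complex.imCLM.hasFDerivAt).comp_hasDerivAt 0 (h5.comp_hasDerivAt 0 h4)
      have h6 : HasDerivAt (fun t : ℝ => (z.im + t) / S) (1 / S) 0 :=
        ((hasDerivAt_id (0 : ℝ)).const_add z.im).div_const S
      refine h3.unique (h6.congr_of_eventuallyEq (Filter.Eventually.of_forall fun t => ?_))
      simp [flatten, hSdef]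
    have hA1 : (L 1).re = S := by simpa using congrArg (fun M => M 1) hA
    have hAI : (L Complex.I).re = 0 := by simpa using congrArg (fun M => M Complex.I) hA
    rw [ContinuousLinearMap.det, ← LinearMap.det_toMatrix Complex.basisOneI, Matrix.det_fin_two]
    simp [LinearMap.toMatrix_apply, hA1, hAI, hB, hS.ne']
  choose! L hL hdet using hd
  have := map_withDensity_abs_det_fderiv_eq_addHaar volume
    (measurableSet_ball (x := (0 : ℂ)) (ε := diskRadius)).nullMeasurableSet
    (fun z hz => (hL z hz).hasFDerivWithinAt) bijOn_flatten.injOn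
  rw [bijOn_flatten.image_eq] at this
  rw [← this]
  congr 1
  conv_lhs => rw [← withDensity_one (μ := volume.restrict (Metric.ball (0 : ℂ) diskRadius))]
  refine withDensity_congr_ae ?_
  filter_upwards [ae_restrict_mem measurableSet_ball] with z hz
  simp [hdet z hz]

/-! ### Extension over the boundary -/

lemma diskD_eq : diskD = Metric.closedBall 0 diskRadius := rfl

lemma interior_diskD : interior diskD = Metric.ball 0 diskRadius := by
  rw [diskD_eq, interior_closedBall _ diskRadius_pos.ne']

lemma frontier_diskD : frontier diskD = Metric.sphere 0 diskRadius := by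
  rw [diskD_eq, frontier_closedBall _ diskRadius_pos.ne']

lemma isClosed_rectAc : IsClosed rectAc :=
  (isClosed_Icc.preimage Complex.continuous_re).inter (isClosed_Icc.preimage Complex.continuous_im)

lemma frontier_rectAc : frontier rectAc = rectAc \ interior rectAc :=
  isClosed_rectAc.frontier_eq

lemma convex_rectAc : Convex ℝ rectAc :=
  ((convex_Icc (0 : ℝ) 1).linear_preimage Complex.reLm).inter
    ((convex_Icc (-1 : ℝ) 1).linear_preimage Complex.imLm)

lemma bijOn_ite {P : ℂ → Prop} [DecidablePred P] {f g : ℂ → ℂ} {S S' T T' : Set ℂ}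
    (hf : Set.BijOn f S T) (hg : Set.BijOn g S' T') (hS : ∀ z ∈ S, P z) (hS' : ∀ z ∈ S', ¬ P z)
    (hT : Disjoint T T') :
    Set.BijOn (fun z => if P z then f z else g z) (S ∪ S') (T ∪ T') := by
  have h1 : Set.BijOn (fun z => if P z then f z else g z) S T :=
    hf.congr fun z hz => by simp [hS z hz]
  have h2 : Set.BijOn (fun z => if P z then f z else g z) S' T' :=
    hg.congr fun z hz => by simp [hS' z hz]
  refine h1.union h2 ?_
  rw [Set.injOn_union (Set.disjoint_left.2 fun z hz hz' => hS' z hz' (hS z hz))]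
  exact ⟨h1.injOn, h2.injOn, fun a ha b hb => hT.ne_of_mem (h1.mapsTo ha) (h2.mapsTo hb)⟩

lemma not_countable_of_re {S : Set ℂ} {a b : ℝ} (hab : a < b)
    (h : ∀ x ∈ Set.Ioo a b, ∃ y : ℝ, (⟨x, y⟩ : ℂ) ∈ S) : ¬ Countable S := by
  intro hS
  have h1 : (Complex.re '' S).Countable := (Set.countable_coe_iff.1 hS).image _
  have h2 : (Set.Ioo a b).Countable := h1.mono fun x hx => by
    obtain ⟨y, hy⟩ := h x hx
    exact ⟨_, hy, rfl⟩
  exact Cardinal.Real.Ioo_countable_iff.1 h2 |>.not_gt hab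

/-- Uncountable Borel sets are in bijection (no continuity is claimed). -/
lemma exists_bijOn_of_not_countable {S T : Set ℂ} (hS : MeasurableSet S) (hT : MeasurableSet T)
    (hS' : ¬ Countable S) (hT' : ¬ Countable T) : ∃ B : ℂ → ℂ, Set.BijOn B S T := by
  classical
  have := hS.standardBorel
  have := hT.standardBorel
  let e := PolishSpace.measurableEquivOfNotCountable hS' hT'
  refine ⟨fun z => if h : z ∈ S then e ⟨z, h⟩ else 0, fun z hz => ?_, fun z hz w hw h => ?_,
    fun w hw => ⟨e.symm ⟨w, hw⟩, (e.symm ⟨w, hw⟩).2, ?_⟩⟩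
  · simp [hz]
  · simp only [dif_pos hz, dif_pos hw] at h
    exact congrArg Subtype.val (e.injective (Subtype.ext h))
  · simp

/-- A bijection between the boundaries that respects the closed upper half-plane. -/
lemma exists_boundary_bijection : ∃ B : ℂ → ℂ,
    Set.BijOn B (Metric.sphere 0 diskRadius) (frontier rectAc) ∧
      ∀ z ∈ Metric.sphere 0 diskRadius, (0 ≤ (B z).im ↔ 0 ≤ z.im) := by
  have hR := diskRadius_pos
  have hm : MeasurableSet {z : ℂ | 0 ≤ z.im} :=
    (isClosed_le continuous_const Complex.continuous_im).measurableSet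
  have hsph : MeasurableSet (Metric.sphere (0 : ℂ) diskRadius) := Metric.isClosed_sphere.measurableSet
  have hfr : MeasurableSet (frontier rectAc) := isClosed_frontier.measurableSet
  have hsp : ∀ x ∈ Set.Ioo (-diskRadius) diskRadius, ∀ y : ℝ, y ^ 2 = diskRadius ^ 2 - x ^ 2 →
      (⟨x, y⟩ : ℂ) ∈ Metric.sphere (0 : ℂ) diskRadius := by
    intro x _ y hy
    rw [mem_sphere_zero_iff_norm, ← sq_eq_sq₀ (norm_nonneg _) hR.le, Complex.sq_norm,
      Complex.normSq_apply]
    simp only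
    linarith
  have hra : ∀ x ∈ Set.Ioo (0 : ℝ) 1, ∀ y : ℝ, y = 1 ∨ y = -1 →
      (⟨x, y⟩ : ℂ) ∈ frontier rectAc := by
    intro x hx y hy
    rw [frontier_rectAc, interior_rectAc]
    refine ⟨⟨Set.Ioo_subset_Icc_self hx, ?_⟩, fun h => ?_⟩
    · rcases hy with rfl | rfl <;> norm_num
    · have := h.2
      rcases hy with rfl | rfl <;> norm_num at this
  obtain ⟨B₁, hB₁⟩ := exists_bijOn_of_not_countable (hsph.inter hm) (hfr.inter hm)
    (not_countable_of_re (show -diskRadius < diskRadius by linarith) fun x hx =>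
      ⟨Real.sqrt (diskRadius ^ 2 - x ^ 2), hsp x hx _ (Real.sq_sqrt (radicand_pos hx).le),
        Real.sqrt_nonneg _⟩)
    (not_countable_of_re zero_lt_one fun x hx => ⟨1, hra x hx 1 (Or.inl rfl), zero_le_one' ℝ⟩)
  obtain ⟨B₂, hB₂⟩ := exists_bijOn_of_not_countable (hsph.diff hm) (hfr.diff hm)
    (not_countable_of_re (show -diskRadius < diskRadius by linarith) fun x hx =>
      ⟨-Real.sqrt (diskRadius ^ 2 - x ^ 2),
        hsp x hx _ (by rw [neg_sq, Real.sq_sqrt (radicand_pos hx).le]),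
        by simpa using (radicand_pos hx)⟩)
    (not_countable_of_re zero_lt_one fun x hx => ⟨-1, hra x hx (-1) (Or.inr rfl), by simp⟩)
  have key := bijOn_ite (P := fun z => 0 ≤ z.im) hB₁ hB₂ (fun z hz => hz.2) (fun z hz => hz.2)
    (Set.disjoint_left.2 fun z hz hz' => hz'.2 hz.2)
  rw [Set.inter_union_sdiff, Set.inter_union_sdiff] at key
  refine ⟨_, key, fun z hz => ?_⟩
  by_cases h : 0 ≤ z.im
  · simp only [h, if_true, iff_true]
    exact (hB₁.mapsTo ⟨hz, h⟩).2
  · simp only [h, if_false, iff_false]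
    exact (hB₂.mapsTo ⟨hz, h⟩).2

/-- An area-preserving bijection of the closed disk onto the closed rectangle, smooth inside,
respecting boundaries and the closed upper half-plane. -/
lemma exists_model : ∃ Φ : ℂ → ℂ,
    Set.BijOn Φ diskD rectAc ∧
    ContDiffOn ℝ (⊤ : ℕ∞) Φ (interior diskD) ∧
    Set.MapsTo Φ (frontier diskD) (frontier rectAc) ∧
    (∀ z ∈ diskD, (0 ≤ (Φ z).im ↔ 0 ≤ z.im)) ∧
    AEMeasurable Φ (volume.restrict diskD) ∧
    Measure.map Φ (volume.restrict diskD) = volume.restrict rectAc := by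
  classical
  obtain ⟨B, hB, hBim⟩ := exists_boundary_bijection
  have hdisj : ∀ z ∈ Metric.sphere (0 : ℂ) diskRadius, z ∉ Metric.ball (0 : ℂ) diskRadius :=
    fun z hz hz' => (Metric.sphere_disjoint_ball.ne_of_mem hz hz') rfl
  have key := bijOn_ite (P := fun z => z ∈ Metric.ball (0 : ℂ) diskRadius) bijOn_flatten hB
    (fun z hz => hz) hdisj disjoint_interior_frontier
  rw [Metric.ball_union_sphere, ← diskD_eq, ← closure_eq_interior_union_frontier,
    isClosed_rectAc.closure_eq] at key
  set Φ : ℂ → ℂ := fun z => if z ∈ Metric.ball (0 : ℂ) diskRadius then flatten z else B z with hΦ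
  have hin : Set.EqOn Φ flatten (Metric.ball 0 diskRadius) := fun z hz => by simp only [hΦ, if_pos hz]
  have hout : Set.EqOn Φ B (Metric.sphere 0 diskRadius) := fun z hz => by
    simp only [hΦ, if_neg (hdisj z hz)]
  have hres : (volume.restrict diskD : Measure ℂ)
      = volume.restrict (Metric.ball 0 diskRadius) := by
    rw [← interior_diskD]
    exact (Measure.restrict_congr_set
      (interior_ae_eq_of_null_frontier (Convex.addHaar_frontier volume (convex_closedBall _ _)))).symm
  have hres' : (volume.restrict rectAc : Measure ℂ) = volume.restrict (interior rectAc) :=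
    (Measure.restrict_congr_set
      (interior_ae_eq_of_null_frontier (Convex.addHaar_frontier volume convex_rectAc))).symm
  have hae : Φ =ᵐ[volume.restrict (Metric.ball 0 diskRadius)] flatten :=
    hin.eventuallyEq_of_mem (ae_restrict_mem measurableSet_ball)
  refine ⟨Φ, key, ?_, ?_, fun z hz => ?_, ?_, ?_⟩
  · rw [interior_diskD]
    exact contDiffOn_flatten.congr hin
  · rw [frontier_diskD]
    exact (hB.congr hout.symm).mapsTo
  · rw [diskD_eq, ← Metric.ball_union_sphere] at hz
    rcases hz with hz | hz
    · rw [hin hz]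
      have hS := Real.sqrt_pos.2 (radicand_pos (mem_ball_iff_chord.1 hz).1)
      simp only [flatten, le_div_iff₀ hS, zero_mul]
    · rw [hout hz]
      exact hBim z hz
  · rw [hres]
    exact (contDiffOn_flatten.continuousOn.aemeasurable measurableSet_ball).congr hae.symm
  · rw [hres, hres', Measure.map_congr hae, map_flatten]

/-! ### Transport to the rectangle -/

lemma continuousOn_invFunOn {f : ℂ → ℂ} {K A : Set ℂ} (hK : IsCompact K)
    (hf : ContinuousOn f K) (hbij : Set.BijOn f K A) :
    ContinuousOn (Function.invFunOn f K) A := by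
  have := isCompact_iff_compactSpace.1 hK
  let e : K ≃ A := hbij.equiv f
  have he : Continuous e :=
    (continuousOn_iff_continuous_domRestrict.1 hf).subtype_mk _
  rw [continuousOn_iff_continuous_domRestrict]
  have h1 : Continuous fun w : A => (e.symm w : ℂ) :=
    continuous_subtype_val.comp he.continuous_symm_of_equiv_compact_to_t2
  refine h1.congr fun w => ?_
  have h2 : f (e.symm w) = w := congrArg Subtype.val (e.apply_symm_apply w)
  change _ = Function.invFunOn f K w
  conv_rhs => rw [← h2]
  exact (hbij.injOn.leftInvOn_invFunOn (e.symm w).2).symm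

/-- The symmetric map `θ₀` preserves or exchanges the closed upper and lower half-planes: it is
real exactly at real points, and the open upper half-disk is connected. -/
lemma im_sign_dichotomy {θ₀ : ℂ → ℂ} (hcont : ContinuousOn θ₀ diskD) (hinj : Set.InjOn θ₀ diskD)
    (hconj : ∀ z ∈ diskD, θ₀ ((starRingEnd ℂ) z) = (starRingEnd ℂ) (θ₀ z)) :
    (∀ z ∈ diskD, (0 ≤ (θ₀ z).im ↔ 0 ≤ z.im)) ∨ (∀ z ∈ diskD, (0 ≤ (θ₀ z).im ↔ z.im ≤ 0)) := by
  have hcD : ∀ z ∈ diskD, (starRingEnd ℂ) z ∈ diskD := by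
    intro z hz
    rw [diskD_eq, mem_closedBall_zero_iff] at hz ⊢
    rwa [Complex.norm_conj]
  have hreal : ∀ z ∈ diskD, ((θ₀ z).im = 0 ↔ z.im = 0) := by
    intro z hz
    rw [← Complex.conj_eq_iff_im, ← Complex.conj_eq_iff_im, ← hconj z hz]
    exact hinj.eq_iff (hcD z hz) hz
  have him : ∀ z ∈ diskD, (θ₀ ((starRingEnd ℂ) z)).im = -(θ₀ z).im := by
    intro z hz
    rw [hconj z hz, Complex.conj_im]
  set S : Set ℂ := diskD ∩ {z | 0 < z.im} with hSdef
  have hS : IsPreconnected S :=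
    ((convex_closedBall _ _).inter (convex_halfSpace_im_gt 0)).isPreconnected
  have hcS : ContinuousOn (fun z => (θ₀ z).im) S :=
    Complex.continuous_im.comp_continuousOn (hcont.mono Set.inter_subset_left)
  have hsign : (∀ z ∈ S, 0 < (θ₀ z).im) ∨ (∀ z ∈ S, (θ₀ z).im < 0) := by
    by_contra! h
    obtain ⟨⟨a, ha, ha'⟩, b, hb, hb'⟩ := h
    obtain ⟨c, hc, hc'⟩ := hS.intermediate_value ha hb hcS ⟨ha', hb'⟩
    exact (ne_of_gt hc.2) ((hreal c hc.1).1 hc')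
  rcases hsign with h | h
  · left
    intro z hz
    rcases lt_trichotomy z.im 0 with hz' | hz' | hz'
    · have := h _ ⟨hcD z hz, by simpa using hz'⟩
      rw [him z hz] at this
      constructor <;> intro <;> linarith
    · simp [hz', (hreal z hz).2 hz']
    · have := h z ⟨hz, hz'⟩
      constructor <;> intro <;> linarith
  · right
    intro z hz
    rcases lt_trichotomy z.im 0 with hz' | hz' | hz'
    · have := h _ ⟨hcD z hz, by simpa using hz'⟩
      rw [him z hz] at this
      constructor <;> intro <;> linarith
    · simp [hz', (hreal z hz).2 hz']
    · have := h z ⟨hz, hz'⟩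
      constructor <;> intro <;> linarith

/-- The model map can be chosen so that `Φ z` and `θ₀ z` lie simultaneously in the closed upper
half-plane; when `θ₀` exchanges half-planes, the model is precomposed with conjugation. -/
lemma exists_adapted_model {θ₀ : ℂ → ℂ} (hcont : ContinuousOn θ₀ diskD)
    (hinj : Set.InjOn θ₀ diskD)
    (hconj : ∀ z ∈ diskD, θ₀ ((starRingEnd ℂ) z) = (starRingEnd ℂ) (θ₀ z)) :
    ∃ Φ : ℂ → ℂ,
      Set.BijOn Φ diskD rectAc ∧
      ContDiffOn ℝ (⊤ : ℕ∞) Φ (interior diskD) ∧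
      Set.MapsTo Φ (frontier diskD) (frontier rectAc) ∧
      (∀ z ∈ diskD, (0 ≤ (Φ z).im ↔ 0 ≤ (θ₀ z).im)) ∧
      Measure.map Φ (volume.restrict diskD) = volume.restrict rectAc := by
  obtain ⟨Φ, h1, h2, h3, h4, h5, h6⟩ := exists_model
  rcases im_sign_dichotomy hcont hinj hconj with h | h
  · exact ⟨Φ, h1, h2, h3, fun z hz => (h4 z hz).trans (h z hz).symm, h6⟩
  have hc : ∀ r : ℝ, Complex.conjLIE ⁻¹' Metric.closedBall 0 r = Metric.closedBall 0 r := by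
    intro r
    ext z
    simp
  have hcb : Set.BijOn Complex.conjLIE diskD diskD := by
    refine ⟨fun z hz => ?_, Complex.conjLIE.injective.injOn, fun z hz => ⟨Complex.conjLIE z, ?_, ?_⟩⟩
    · rw [diskD_eq, ← hc] at hz
      exact hz
    · rw [diskD_eq, ← hc] at hz
      exact hz
    · simp
  have hmp : MeasurePreserving Complex.conjLIE (volume.restrict diskD) (volume.restrict diskD) := by
    have := Complex.conjLIE.measurePreserving.restrict_preimage
      (Metric.isClosed_closedBall (x := (0 : ℂ)) (ε := diskRadius)).measurableSet
    rwa [hc] at this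
  refine ⟨Φ ∘ Complex.conjLIE, h1.comp hcb, ?_, ?_, fun z hz => ?_, ?_⟩
  · refine h2.comp Complex.conjLIE.contDiff.contDiffOn fun z hz => ?_
    rw [interior_diskD] at hz ⊢
    simpa using hz
  · refine h3.comp fun z hz => ?_
    rw [frontier_diskD] at hz ⊢
    simpa using hz
  · rw [h z hz, Function.comp_apply, h4 _ (hcb.mapsTo hz)]
    simp
  · rw [← AEMeasurable.map_map_of_aemeasurable (by rwa [hmp.map_eq]) hmp.aemeasurable, hmp.map_eq, h6]

/-- Moser's lemma, symmetric version. -/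
theorem stmt_6 (θ₀ : ℂ → ℂ)
    (hcont : ContinuousOn θ₀ diskD)
    (hbij : Set.BijOn θ₀ diskD rectAc)
    (hanal : DifferentiableOn ℂ θ₀ (interior diskD))
    (hconj : ∀ z ∈ diskD, θ₀ ((starRingEnd ℂ) z) = (starRingEnd ℂ) (θ₀ z)) :
    ∃ u : ℂ → ℂ,
      Set.BijOn u rectAc rectAc ∧
      ContDiffOn ℝ (⊤ : ℕ∞) u (interior rectAc) ∧
      Set.MapsTo u (frontier rectAc) (frontier rectAc) ∧
      u '' {z : ℂ | z ∈ rectAc ∧ 0 ≤ z.im} = {z : ℂ | z ∈ rectAc ∧ 0 ≤ z.im} ∧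
      Measure.map (u ∘ θ₀) (volume.restrict diskD) = volume.restrict rectAc := by
  obtain ⟨Φ, h1, h2, h3, h4, h5⟩ := exists_adapted_model hcont hbij.injOn hconj
  set g := Function.invFunOn θ₀ diskD with hgdef
  have hinv : Set.InvOn g θ₀ diskD rectAc := hbij.invOn_invFunOn
  have hgb : Set.BijOn g rectAc diskD := (Set.bijOn_comm hinv).2 hbij
  have hfg : ∀ w ∈ rectAc, θ₀ (g w) = w := fun w hw => hinv.2 hw
  have hgc : ContinuousOn g rectAc := continuousOn_invFunOn (isCompact_closedBall _ _) hcont hbij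
  have hgint : Set.MapsTo g (interior rectAc) (interior diskD) := by
    intro w hw
    rw [interior_diskD]
    exact mem_ball_of_mem_interior hcont hgc hbij hgb.mapsTo hfg (hgb.mapsTo (interior_subset hw))
      (by rwa [hfg w (interior_subset hw)])
  have hgd : DifferentiableOn ℂ g (interior rectAc) := fun w hw =>
    (differentiableAt_of_injOn_rightInverse isOpen_interior isOpen_interior hanal
      (hbij.injOn.mono interior_subset) (hgc.mono interior_subset) hgint
      (fun v hv => hfg v (interior_subset hv)) hw rfl).differentiableWithinAt
  have hgs : ContDiffOn ℝ (⊤ : ℕ∞) g (interior rectAc) :=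
    (hgd.contDiffOn isOpen_interior).restrict_scalars ℝ
  have hopen : IsOpen (θ₀ '' interior diskD) := by
    have hpre : IsPreconnected (interior diskD) := by
      rw [interior_diskD]
      exact (convex_ball _ _).isPreconnected
    refine ((hanal.analyticOnNhd isOpen_interior).is_constant_or_isOpen hpre).elim ?_
      fun h => h _ subset_rfl isOpen_interior
    rintro ⟨c, hc⟩
    have hR := diskRadius_pos
    have ha : (0 : ℂ) ∈ interior diskD := by simpa [interior_diskD] using hR
    have hb : ((diskRadius / 2 : ℝ) : ℂ) ∈ interior diskD := by
      rw [interior_diskD, mem_ball_zero_iff, Complex.norm_real, Real.norm_of_nonneg (by positivity)]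
      linarith
    have := hbij.injOn (interior_subset ha) (interior_subset hb) ((hc _ ha).trans (hc _ hb).symm)
    rw [eq_comm, Complex.ofReal_eq_zero] at this
    linarith
  have hsub : θ₀ '' interior diskD ⊆ interior rectAc :=
    interior_maximal ((Set.image_mono interior_subset).trans hbij.image_eq.subset) hopen
  have hgfr : Set.MapsTo g (frontier rectAc) (frontier diskD) := by
    intro w hw
    rw [frontier_rectAc] at hw
    rw [diskD_eq, Metric.isClosed_closedBall.frontier_eq, ← diskD_eq]
    refine ⟨hgb.mapsTo hw.1, fun h => hw.2 ?_⟩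
    rw [← hfg w hw.1]
    exact hsub (Set.mem_image_of_mem _ h)
  have hub : Set.BijOn (Φ ∘ g) rectAc rectAc := h1.comp hgb
  have hus : ∀ w ∈ rectAc, (0 ≤ ((Φ ∘ g) w).im ↔ 0 ≤ w.im) := by
    intro w hw
    rw [Function.comp_apply, h4 _ (hgb.mapsTo hw), hfg w hw]
  refine ⟨Φ ∘ g, hub, h2.comp hgs hgint, h3.comp hgfr, ?_, ?_⟩
  · ext v
    constructor
    · rintro ⟨w, ⟨hw, hw'⟩, rfl⟩
      exact ⟨hub.mapsTo hw, (hus w hw).2 hw'⟩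
    · rintro ⟨hv, hv'⟩
      obtain ⟨w, hw, rfl⟩ := hub.surjOn hv
      exact ⟨w, ⟨hw, (hus w hw).1 hv'⟩, rfl⟩
  · rw [← h5]
    refine Measure.map_congr ?_
    filter_upwards [ae_restrict_mem
      (Metric.isClosed_closedBall (x := (0 : ℂ)) (ε := diskRadius)).measurableSet] with z hz
    simp only [Function.comp_apply]
    rw [hinv.1 hz]
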